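/- Assume condition (19) (c_a h_t(x) ≤ a_t(x',x) ≤ C_a h_t(x) for all t, x, x') and condition (20) (0 < ∫ b_t(x, y_t) h_t(x) dμ(x) < ∞ for all t). Then for any two probability densities f and g and any s < t, ‖K_{s,t}(f) − K_{s,t}(g)‖₁ ≤ γ_a^{-1} (1 − γ_a)^{t−s} ‖f − g‖₁, where γ_a = c_a/C_a. -/

import Mathlib

open MeasureTheory

/-- The Markov operator `A_t*`. -/
noncomputable def markovOp {α : Type*} [MeasurableSpace α] (μ : Measure α)
    (a : α → α → ℝ) (f : α → ℝ) : α → ℝ :=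
  fun x => ∫ x', f x' * a x' x ∂μ

/-- The Bayes operator `B(f, b)`. -/
noncomputable def bayesOp {α : Type*} [MeasurableSpace α] (μ : Measure α)
    (f b : α → ℝ) : α → ℝ :=
  fun x => f x * b x / ∫ x', f x' * b x' ∂μ

/-- The filter transition operator `K_{s,t}`, defined by `K_{t,t}(f) = f` and
`K_{s,t}(f) = K_{s+1,t}(B(A_{s+1}* f, b_{s+1}))` for `s < t`; equivalently, apply
the one-step filter updates for times `s+1, …, t` in turn. -/
noncomputable def filterK {α : Type*} [MeasurableSpace α] (μ : Measure α)
    (a : ℕ → α → α → ℝ) (b : ℕ → α → ℝ) (s t : ℕ) (f : α → ℝ) : α → ℝ :=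
  ((List.range (t - s)).map fun i => s + 1 + i).foldl
    (fun g r => bayesOp μ (markovOp μ (a r) g) (b r)) f

/-!
Conditioning on the observations up to time `t` as well turns the filter into a Markov chain. Let
`β_s` be the likelihood of the observations `s + 1, …, t` given the state at time `s`. Then
`K_{s,t} f` is the law at time `t` of the inhomogeneous chain that starts from `B(f, β_s)` and has
transition densities `a_r(x', x) b_r(x) β_r(x) / β_{r-1}(x')`. By (19) each of these dominates
`γ_a` times a probability density that does not depend on `x'`, so by Doeblin's argument every step
contracts the `L₁` distance by the factor `1 - γ_a`. Again by (19), `β_s` varies by a factor of at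
most `γ_a⁻¹`, which bounds the Lipschitz constant of `f ↦ B(f, β_s)`.
-/

section Density

variable {α : Type*} [MeasurableSpace α] {μ : Measure α}

/-- Probability densities with respect to `μ`. -/
structure IsDensity (μ : Measure α) (f : α → ℝ) : Prop where
  nonneg : ∀ x, 0 ≤ f x
  integrable : Integrable f μ
  integral_eq_one : ∫ x, f x ∂μ = 1

theorem IsDensity.le_integral_mul {f β : α → ℝ} {m : ℝ} (hf : IsDensity μ f)
    (hfβ : Integrable (fun x => f x * β x) μ) (hm : ∀ x, m ≤ β x) :
    m ≤ ∫ x, f x * β x ∂μ :=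
  calc m = ∫ x, f x * m ∂μ := by rw [integral_mul_const, hf.integral_eq_one, one_mul]
    _ ≤ ∫ x, f x * β x ∂μ := integral_mono (hf.integrable.mul_const m) hfβ
      fun x => mul_le_mul_of_nonneg_left (hm x) (hf.nonneg x)

theorem IsDensity.integral_abs_sub {f g : α → ℝ} (hf : IsDensity μ f) (hg : IsDensity μ g) :
    ∫ x, |f x - g x| ∂μ = 2 * ∫ x, max (f x - g x) 0 ∂μ := by
  have hfg : Integrable (fun x => f x - g x) μ := hf.integrable.sub hg.integrable
  have habs (r : ℝ) : |r| = 2 * max r 0 - r := by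
    rcases le_total 0 r with hr | hr
    · rw [abs_of_nonneg hr, max_eq_left hr, two_mul, add_sub_cancel_right]
    · rw [abs_of_nonpos hr, max_eq_right hr, mul_zero, zero_sub]
  simp_rw [habs]
  rw [integral_sub (hfg.pos_part.const_mul 2) hfg, integral_const_mul,
    integral_sub hf.integrable hg.integrable, hf.integral_eq_one, hg.integral_eq_one, sub_self,
    sub_zero]

end Density

section Bayes

variable {α : Type*} [MeasurableSpace α] {μ : Measure α} {f g b β : α → ℝ}

theorem integral_bayesOp (hfb : ∫ x, f x * b x ∂μ ≠ 0) : ∫ x, bayesOp μ f b x ∂μ = 1 := by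
  simp only [bayesOp]
  rw [integral_div, div_self hfb]

theorem isDensity_bayesOp (hf : ∀ x, 0 ≤ f x) (hb : ∀ x, 0 ≤ b x)
    (hfb : 0 < ∫ x, f x * b x ∂μ) : IsDensity μ (bayesOp μ f b) where
  nonneg x := div_nonneg (mul_nonneg (hf x) (hb x)) hfb.le
  integrable := (Integrable.of_integral_ne_zero hfb.ne').div_const _
  integral_eq_one := integral_bayesOp hfb.ne'

theorem IsDensity.bayesOp_one (hf : IsDensity μ f) : bayesOp μ f 1 = f := by
  funext x
  simp [bayesOp, hf.integral_eq_one]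

theorem bayesOp_bayesOp (hfb : ∫ x, f x * b x ∂μ ≠ 0) :
    bayesOp μ (bayesOp μ f b) β = bayesOp μ f (b * β) := by
  funext x
  simp only [bayesOp, Pi.mul_apply, div_mul_eq_mul_div, integral_div,
    div_div_div_cancel_right₀ hfb, mul_assoc]

theorem bayesOp_sub_bayesOp_le {x : α} (hg : 0 ≤ g x) (hβ : 0 ≤ β x)
    (hgβ : 0 < ∫ x, g x * β x ∂μ) (hle : ∫ x, g x * β x ∂μ ≤ ∫ x, f x * β x ∂μ) :
    bayesOp μ f β x - bayesOp μ g β x ≤ β x / (∫ x, f x * β x ∂μ) * (f x - g x) :=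
  calc bayesOp μ f β x - bayesOp μ g β x
      ≤ f x * β x / (∫ x, f x * β x ∂μ) - g x * β x / (∫ x, f x * β x ∂μ) :=
        sub_le_sub_left (div_le_div_of_nonneg_left (mul_nonneg hg hβ) hgβ hle) _
    _ = β x / (∫ x, f x * β x ∂μ) * (f x - g x) := by ring

/-- Comparing only the positive parts of the differences, which carry half of the `L₁` norm, gives
the constant `M / m` instead of `2 * M / m`. -/
theorem IsDensity.integral_abs_bayesOp_sub_le {m M : ℝ} (hf : IsDensity μ f)
    (hg : IsDensity μ g) (hβ : AEStronglyMeasurable β μ) (hm : 0 < m) (hmβ : ∀ x, m ≤ β x)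
    (hβM : ∀ x, β x ≤ M) :
    ∫ x, |bayesOp μ f β x - bayesOp μ g β x| ∂μ ≤ M / m * ∫ x, |f x - g x| ∂μ := by
  wlog hle : ∫ x, g x * β x ∂μ ≤ ∫ x, f x * β x ∂μ generalizing f g
  · simpa only [abs_sub_comm] using this hg hf (le_of_not_ge hle)
  have hβ_nonneg (x : α) : 0 ≤ β x := hm.le.trans (hmβ x)
  have hmass {u : α → ℝ} (hu : IsDensity μ u) : m ≤ ∫ x, u x * β x ∂μ := by
    refine hu.le_integral_mul (hu.integrable.mul_bdd (c := M) hβ (.of_forall fun x => ?_)) hmβ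
    rw [Real.norm_of_nonneg (hβ_nonneg x)]
    exact hβM x
  have hF : 0 < ∫ x, f x * β x ∂μ := hm.trans_le (hmass hf)
  have hG : 0 < ∫ x, g x * β x ∂μ := hm.trans_le (hmass hg)
  have hpos (x : α) :
      max (bayesOp μ f β x - bayesOp μ g β x) 0 ≤ M / m * max (f x - g x) 0 := by
    have hM : 0 ≤ M := (hβ_nonneg x).trans (hβM x)
    refine max_le ((bayesOp_sub_bayesOp_le (hg.nonneg x) (hβ_nonneg x) hG hle).trans ?_)
      (by positivity)
    calc β x / (∫ x, f x * β x ∂μ) * (f x - g x)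
        ≤ β x / (∫ x, f x * β x ∂μ) * max (f x - g x) 0 :=
          mul_le_mul_of_nonneg_left (le_max_left _ _) (div_nonneg (hβ_nonneg x) hF.le)
      _ ≤ M / m * max (f x - g x) 0 := by gcongr; exacts [hβM x, hmass hf]
  have hBf : IsDensity μ (bayesOp μ f β) := isDensity_bayesOp hf.nonneg hβ_nonneg hF
  have hBg : IsDensity μ (bayesOp μ g β) := isDensity_bayesOp hg.nonneg hβ_nonneg hG
  rw [hBf.integral_abs_sub hBg, hf.integral_abs_sub hg, mul_left_comm, ← integral_const_mul (M / m)]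
  gcongr 2 * ?_
  exact integral_mono (hBf.integrable.sub hBg.integrable).pos_part
    ((hf.integrable.sub hg.integrable).pos_part.const_mul _) hpos

end Bayes

section Markov

theorem integrable_prod_mul_kernel {α β : Type*} [MeasurableSpace α] [MeasurableSpace β]
    {μ : Measure α} {ν : Measure β} [SFinite ν] {k : α → β → ℝ} {M : ℝ} {u : α → ℝ}
    (hk : AEStronglyMeasurable (Function.uncurry k) (μ.prod ν)) (hk_nonneg : ∀ x y, 0 ≤ k x y)
    (hk_int : ∀ x, Integrable (k x) ν) (hkM : ∀ x, ∫ y, k x y ∂ν ≤ M) (hu : Integrable u μ) :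
    Integrable (fun z : α × β => u z.1 * k z.1 z.2) (μ.prod ν) := by
  have hmeas : AEStronglyMeasurable (fun z : α × β => u z.1 * k z.1 z.2) (μ.prod ν) :=
    hu.1.comp_fst.mul hk
  refine (integrable_prod_iff hmeas).2 ⟨.of_forall fun x => (hk_int x).const_mul (u x), ?_⟩
  simp only [norm_mul, integral_const_mul, Real.norm_of_nonneg (hk_nonneg _ _)]
  refine hu.norm.mul_bdd (c := M) hk.integral_prod_right' (.of_forall fun x => ?_)
  rw [Real.norm_of_nonneg (integral_nonneg (hk_nonneg x))]
  exact hkM x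

variable {α : Type*} [MeasurableSpace α] {μ : Measure α} [SFinite μ]

theorem integral_abs_markovOp_le {k : α → α → ℝ} {M : ℝ} {u : α → ℝ}
    (hk : AEStronglyMeasurable (Function.uncurry k) (μ.prod μ)) (hk_nonneg : ∀ x' x, 0 ≤ k x' x)
    (hk_int : ∀ x', Integrable (k x') μ) (hkM : ∀ x', ∫ x, k x' x ∂μ ≤ M)
    (hu : Integrable u μ) :
    ∫ x, |markovOp μ k u x| ∂μ ≤ M * ∫ x, |u x| ∂μ := by
  have hprod {v : α → ℝ} (hv : Integrable v μ) :=
    integrable_prod_mul_kernel hk hk_nonneg hk_int hkM hv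
  calc ∫ x, |markovOp μ k u x| ∂μ
      ≤ ∫ x, ∫ x', |u x'| * k x' x ∂μ ∂μ := by
        refine integral_mono (hprod hu).integral_prod_right.abs
          (hprod hu.abs).integral_prod_right fun x => abs_integral_le_integral_abs.trans_eq ?_
        simp_rw [abs_mul, abs_of_nonneg (hk_nonneg _ _)]
    _ = ∫ x', |u x'| * ∫ x, k x' x ∂μ ∂μ := by
        rw [← integral_integral_swap (hprod hu.abs)]
        simp_rw [integral_const_mul]
    _ ≤ ∫ x', |u x'| * M ∂μ := by
        refine integral_mono ?_ (hu.abs.mul_const M)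
          fun x' => mul_le_mul_of_nonneg_left (hkM x') (abs_nonneg _)
        simpa only [integral_const_mul] using (hprod hu.abs).integral_prod_left
    _ = M * ∫ x, |u x| ∂μ := by rw [integral_mul_const, mul_comm]

/-- Since `u` and `v` have the same mass, `markovOp` does not see the minorant `γ * ν x` in the
difference, and the remaining kernel `p x' x - γ * ν x` is nonnegative with mass `1 - γ`. -/
theorem integral_abs_markovOp_sub_le_of_doeblin {p : α → α → ℝ} {ν u v : α → ℝ} {γ : ℝ}
    (hp : AEStronglyMeasurable (Function.uncurry p) (μ.prod μ))
    (hp_one : ∀ x', ∫ x, p x' x ∂μ = 1) (hν_one : ∫ x, ν x ∂μ = 1)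
    (hνp : ∀ x' x, γ * ν x ≤ p x' x)
    (hu : Integrable u μ) (hv : Integrable v μ) (huv : ∫ x, u x ∂μ = ∫ x, v x ∂μ) :
    ∫ x, |markovOp μ p u x - markovOp μ p v x| ∂μ ≤ (1 - γ) * ∫ x, |u x - v x| ∂μ := by
  have hν_int : Integrable ν μ := .of_integral_ne_zero (by simp [hν_one])
  have hp_int (x' : α) : Integrable (p x') μ := .of_integral_ne_zero (by simp [hp_one])
  set k : α → α → ℝ := fun x' x => p x' x - γ * ν x
  have hk : AEStronglyMeasurable (Function.uncurry k) (μ.prod μ) :=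
    hp.sub (hν_int.1.comp_snd.const_mul γ)
  have hk_nonneg (x' x : α) : 0 ≤ k x' x := sub_nonneg.2 (hνp x' x)
  have hk_int (x' : α) : Integrable (k x') μ := (hp_int x').sub (hν_int.const_mul γ)
  have hk_mass (x' : α) : ∫ x, k x' x ∂μ ≤ 1 - γ := by
    rw [integral_sub (hp_int x') (hν_int.const_mul γ), integral_const_mul, hp_one, hν_one, mul_one]
  have hk_ae {w : α → ℝ} (hw : Integrable w μ) : ∀ᵐ x ∂μ, Integrable (fun x' => w x' * k x' x) μ :=
    (integrable_prod_mul_kernel hk hk_nonneg hk_int hk_mass hw).prod_left_ae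
  have hsplit {w : α → ℝ} (hw : Integrable w μ) {x : α}
      (hwx : Integrable (fun x' => w x' * k x' x) μ) :
      markovOp μ p w x = markovOp μ k w x + (∫ x', w x' ∂μ) * (γ * ν x) := by
    simp only [markovOp]
    rw [← integral_mul_const, ← integral_add hwx (hw.mul_const _)]
    simp only [k, ← mul_add, sub_add_cancel]
  have hdiff : ∀ᵐ x ∂μ, markovOp μ p u x - markovOp μ p v x = markovOp μ k (u - v) x := by
    filter_upwards [hk_ae hu, hk_ae hv] with x hux hvx
    rw [hsplit hu hux, hsplit hv hvx, huv, add_sub_add_right_eq_sub]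
    simp only [markovOp, Pi.sub_apply, sub_mul]
    rw [integral_sub hux hvx]
  rw [integral_congr_ae (hdiff.mono fun x hx => congrArg abs hx)]
  exact integral_abs_markovOp_le hk hk_nonneg hk_int hk_mass (hu.sub hv)

end Markov

section Smoothing

variable {α : Type*} [MeasurableSpace α] {μ : Measure α} {a : α → α → ℝ} {f g h β : α → ℝ}
  {c C m M : ℝ}

/-- The `L₂(μ)`-adjoint of `markovOp μ a`: for a transition density `a` it maps `g` to the
conditional expectation of `g` at the next state, given the present one. -/
noncomputable def dualMarkovOp (μ : Measure α) (a : α → α → ℝ) (g : α → ℝ) : α → ℝ :=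
  fun x' => ∫ x, a x' x * g x ∂μ

/-- The transition density of the state conditioned on later observations, where `g` is the
likelihood of those observations given the next state. -/
noncomputable def smoothingKernel (μ : Measure α) (a : α → α → ℝ) (g : α → ℝ) : α → α → ℝ :=
  fun x' x => a x' x * g x / dualMarkovOp μ a g x'

/-- Condition (19) for a single transition density `a`, where `h` is only required to be
nonnegative. -/
structure StrongMixing (a : α → α → ℝ) (h : α → ℝ) (c C : ℝ) : Prop where
  measurable : Measurable (Function.uncurry a)
  nonneg : ∀ x, 0 ≤ h x
  pos : 0 < c
  le : c ≤ C
  lower : ∀ x' x, c * h x ≤ a x' x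
  upper : ∀ x' x, a x' x ≤ C * h x

/-- Condition (20) for a single likelihood function `g`. -/
structure AdmissibleLikelihood (μ : Measure α) (h g : α → ℝ) : Prop where
  measurable : Measurable g
  nonneg : ∀ x, 0 ≤ g x
  integrable : Integrable (fun x => g x * h x) μ
  integral_pos : 0 < ∫ x, g x * h x ∂μ

theorem AdmissibleLikelihood.mul_bdd (hg : AdmissibleLikelihood μ h g) (hh : ∀ x, 0 ≤ h x)
    (hβ : Measurable β) (hm : 0 < m) (hmβ : ∀ x, m ≤ β x) (hβM : ∀ x, β x ≤ M) :
    AdmissibleLikelihood μ h (g * β) := by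
  have hint : Integrable (fun x => (g * β) x * h x) μ := by
    simp_rw [Pi.mul_apply, mul_right_comm]
    refine hg.integrable.mul_bdd (c := M) hβ.aestronglyMeasurable (.of_forall fun x => ?_)
    rw [Real.norm_of_nonneg (hm.le.trans (hmβ x))]
    exact hβM x
  refine ⟨hg.measurable.mul hβ, fun x => mul_nonneg (hg.nonneg x) (hm.le.trans (hmβ x)), hint, ?_⟩
  calc 0 < (∫ x, g x * h x ∂μ) * m := mul_pos hg.integral_pos hm
    _ = ∫ x, g x * h x * m ∂μ := (integral_mul_const _ _).symm
    _ ≤ ∫ x, (g * β) x * h x ∂μ := by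
      refine integral_mono (hg.integrable.mul_const m) hint fun x => ?_
      simp only [Pi.mul_apply, mul_right_comm _ (β x)]
      exact mul_le_mul_of_nonneg_left (hmβ x) (mul_nonneg (hg.nonneg x) (hh x))

namespace StrongMixing

theorem kernel_nonneg (ha : StrongMixing a h c C) (x' x : α) : 0 ≤ a x' x :=
  (mul_nonneg ha.pos.le (ha.nonneg x)).trans (ha.lower x' x)

theorem one_sub_div_nonneg (ha : StrongMixing a h c C) : 0 ≤ 1 - c / C :=
  sub_nonneg.2 (div_le_one_of_le₀ ha.le (ha.pos.le.trans ha.le))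

theorem markovOp_nonneg (ha : StrongMixing a h c C) (hf : ∀ x, 0 ≤ f x) (x : α) :
    0 ≤ markovOp μ a f x :=
  integral_nonneg fun x' => mul_nonneg (hf x') (ha.kernel_nonneg x' x)

theorem measurable_kernel_mul (ha : StrongMixing a h c C) (hg : Measurable g) :
    Measurable (Function.uncurry fun x' x => a x' x * g x) :=
  ha.measurable.mul (hg.comp measurable_snd)

theorem lower_mul (ha : StrongMixing a h c C) (hg : ∀ x, 0 ≤ g x) (x' x : α) :
    c * (g x * h x) ≤ a x' x * g x := by
  rw [mul_left_comm, mul_comm (a x' x)]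
  exact mul_le_mul_of_nonneg_left (ha.lower x' x) (hg x)

theorem upper_mul (ha : StrongMixing a h c C) (hg : ∀ x, 0 ≤ g x) (x' x : α) :
    a x' x * g x ≤ C * (g x * h x) := by
  rw [mul_left_comm, mul_comm (a x' x)]
  exact mul_le_mul_of_nonneg_left (ha.upper x' x) (hg x)

theorem integrable_kernel_mul (ha : StrongMixing a h c C) (hg : AdmissibleLikelihood μ h g)
    (x' : α) : Integrable (fun x => a x' x * g x) μ := by
  refine (hg.integrable.const_mul C).mono'
    ((ha.measurable_kernel_mul hg.measurable).comp measurable_prodMk_left).aestronglyMeasurable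
    (.of_forall fun x => ?_)
  rw [Real.norm_of_nonneg (mul_nonneg (ha.kernel_nonneg x' x) (hg.nonneg x))]
  exact ha.upper_mul hg.nonneg x' x

theorem le_dualMarkovOp (ha : StrongMixing a h c C) (hg : AdmissibleLikelihood μ h g) (x' : α) :
    c * ∫ x, g x * h x ∂μ ≤ dualMarkovOp μ a g x' := by
  rw [← integral_const_mul]
  exact integral_mono (hg.integrable.const_mul c) (ha.integrable_kernel_mul hg x')
    (ha.lower_mul hg.nonneg x')

theorem dualMarkovOp_le (ha : StrongMixing a h c C) (hg : AdmissibleLikelihood μ h g) (x' : α) :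
    dualMarkovOp μ a g x' ≤ C * ∫ x, g x * h x ∂μ := by
  rw [← integral_const_mul]
  exact integral_mono (ha.integrable_kernel_mul hg x') (hg.integrable.const_mul C)
    (ha.upper_mul hg.nonneg x')

theorem dualMarkovOp_pos (ha : StrongMixing a h c C) (hg : AdmissibleLikelihood μ h g) (x' : α) :
    0 < dualMarkovOp μ a g x' :=
  (mul_pos ha.pos hg.integral_pos).trans_le (ha.le_dualMarkovOp hg x')

theorem le_smoothingKernel (ha : StrongMixing a h c C) (hg : AdmissibleLikelihood μ h g)
    (x' x : α) : c / C * bayesOp μ g h x ≤ smoothingKernel μ a g x' x :=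
  calc c / C * bayesOp μ g h x = c * (g x * h x) / (C * ∫ x, g x * h x ∂μ) :=
        div_mul_div_comm _ _ _ _
    _ ≤ a x' x * g x / dualMarkovOp μ a g x' :=
        div_le_div₀ (mul_nonneg (ha.kernel_nonneg x' x) (hg.nonneg x))
          (ha.lower_mul hg.nonneg x' x) (ha.dualMarkovOp_pos hg x') (ha.dualMarkovOp_le hg x')

variable [SFinite μ]

theorem measurable_dualMarkovOp (ha : StrongMixing a h c C) (hg : Measurable g) :
    Measurable (dualMarkovOp μ a g) :=
  (ha.measurable_kernel_mul hg).stronglyMeasurable.integral_prod_right.measurable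

theorem integrable_mul_dualMarkovOp (ha : StrongMixing a h c C)
    (hg : AdmissibleLikelihood μ h g) (hf : Integrable f μ) :
    Integrable (fun x => f x * dualMarkovOp μ a g x) μ := by
  refine hf.mul_bdd (c := C * ∫ x, g x * h x ∂μ)
    (ha.measurable_dualMarkovOp hg.measurable).aestronglyMeasurable (.of_forall fun x => ?_)
  rw [Real.norm_of_nonneg (ha.dualMarkovOp_pos hg x).le]
  exact ha.dualMarkovOp_le hg x

theorem integral_markovOp_mul (ha : StrongMixing a h c C) (hg : AdmissibleLikelihood μ h g)
    (hf : Integrable f μ) :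
    ∫ x, markovOp μ a f x * g x ∂μ = ∫ x, f x * dualMarkovOp μ a g x ∂μ := by
  have hprod : Integrable (fun z : α × α => f z.1 * (a z.1 z.2 * g z.2)) (μ.prod μ) :=
    integrable_prod_mul_kernel (ha.measurable_kernel_mul hg.measurable).aestronglyMeasurable
      (fun x' x => mul_nonneg (ha.kernel_nonneg x' x) (hg.nonneg x))
      (ha.integrable_kernel_mul hg) (ha.dualMarkovOp_le hg) hf
  simp_rw [markovOp, dualMarkovOp, ← integral_mul_const, ← integral_const_mul, mul_assoc]
  exact (integral_integral_swap hprod).symm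

theorem integral_mul_dualMarkovOp_pos (ha : StrongMixing a h c C)
    (hg : AdmissibleLikelihood μ h g) (hf : IsDensity μ f) :
    0 < ∫ x, f x * dualMarkovOp μ a g x ∂μ :=
  (mul_pos ha.pos hg.integral_pos).trans_le
    (hf.le_integral_mul (ha.integrable_mul_dualMarkovOp hg hf.integrable) (ha.le_dualMarkovOp hg))

theorem integral_markovOp_mul_pos (ha : StrongMixing a h c C) (hg : AdmissibleLikelihood μ h g)
    (hf : IsDensity μ f) : 0 < ∫ x, markovOp μ a f x * g x ∂μ := by
  rw [ha.integral_markovOp_mul hg hf.integrable]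
  exact ha.integral_mul_dualMarkovOp_pos hg hf

theorem isDensity_bayesOp_markovOp (ha : StrongMixing a h c C)
    (hg : AdmissibleLikelihood μ h g) (hf : IsDensity μ f) :
    IsDensity μ (bayesOp μ (markovOp μ a f) g) :=
  isDensity_bayesOp (ha.markovOp_nonneg hf.nonneg) hg.nonneg (ha.integral_markovOp_mul_pos hg hf)

theorem isDensity_bayesOp_dualMarkovOp (ha : StrongMixing a h c C)
    (hg : AdmissibleLikelihood μ h g) (hf : IsDensity μ f) :
    IsDensity μ (bayesOp μ f (dualMarkovOp μ a g)) :=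
  isDensity_bayesOp hf.nonneg (fun x => (ha.dualMarkovOp_pos hg x).le)
    (ha.integral_mul_dualMarkovOp_pos hg hf)

theorem bayesOp_markovOp (ha : StrongMixing a h c C) (hg : AdmissibleLikelihood μ h g)
    (hf : Integrable f μ) :
    bayesOp μ (markovOp μ a f) g
      = markovOp μ (smoothingKernel μ a g) (bayesOp μ f (dualMarkovOp μ a g)) := by
  funext x
  rw [bayesOp, ha.integral_markovOp_mul hg hf]
  simp only [markovOp, bayesOp, smoothingKernel]
  rw [← integral_mul_const, ← integral_div]
  congr 1 with x'
  have hx' := (ha.dualMarkovOp_pos hg x').ne'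
  field_simp

theorem measurable_smoothingKernel (ha : StrongMixing a h c C) (hg : Measurable g) :
    Measurable (Function.uncurry (smoothingKernel μ a g)) :=
  (ha.measurable_kernel_mul hg).div ((ha.measurable_dualMarkovOp hg).comp measurable_fst)

theorem integral_abs_bayesOp_markovOp_sub_le (ha : StrongMixing a h c C)
    (hg : AdmissibleLikelihood μ h g) {u v : α → ℝ} (hu : IsDensity μ u)
    (hv : IsDensity μ v) :
    ∫ x, |bayesOp μ (markovOp μ a u) g x - bayesOp μ (markovOp μ a v) g x| ∂μ
      ≤ (1 - c / C) * ∫ x, |bayesOp μ u (dualMarkovOp μ a g) x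
          - bayesOp μ v (dualMarkovOp μ a g) x| ∂μ := by
  have hBu := ha.isDensity_bayesOp_dualMarkovOp hg hu
  have hBv := ha.isDensity_bayesOp_dualMarkovOp hg hv
  rw [ha.bayesOp_markovOp hg hu.integrable, ha.bayesOp_markovOp hg hv.integrable]
  refine integral_abs_markovOp_sub_le_of_doeblin
    (ha.measurable_smoothingKernel hg.measurable).aestronglyMeasurable (fun x' => ?_)
    (integral_bayesOp hg.integral_pos.ne') (ha.le_smoothingKernel hg) hBu.integrable hBv.integrable
    (hBu.integral_eq_one.trans hBv.integral_eq_one.symm)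
  exact (integral_div _ _).trans (div_self (ha.dualMarkovOp_pos hg x').ne')

end StrongMixing

end Smoothing

section Filter

variable {α : Type*} [MeasurableSpace α] {μ : Measure α} {a : ℕ → α → α → ℝ} {b h : ℕ → α → ℝ}
  {c C : ℝ} {f g : α → ℝ}

theorem filterK_self (s : ℕ) : filterK μ a b s s f = f := by
  simp [filterK]

theorem filterK_of_lt {s t : ℕ} (hst : s < t) :
    filterK μ a b s t f
      = filterK μ a b (s + 1) t (bayesOp μ (markovOp μ (a (s + 1)) f) (b (s + 1))) := by
  obtain ⟨n, rfl⟩ := Nat.exists_eq_add_of_lt hst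
  have hsub : s + n + 1 - s = n + 1 := by lia
  have hsub' : s + n + 1 - (s + 1) = n := by lia
  have hcomp : (fun i => s + 1 + i) ∘ Nat.succ = fun i => s + 1 + 1 + i := by
    funext i
    simp only [Function.comp_apply]
    lia
  simp only [filterK, hsub, hsub', List.range_succ_eq_map, List.map_cons, List.map_map, hcomp,
    List.foldl_cons, add_zero]

/-- The likelihood of the observations at times `s + 1, …, s + n` given the state at time `s`. For a
final time `t` it is `β_s` with `n = t - s`, so that the recursion is structural in `n`. -/
noncomputable def backwardLikelihood (μ : Measure α) (a : ℕ → α → α → ℝ) (b : ℕ → α → ℝ) :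
    ℕ → ℕ → α → ℝ
  | 0, _ => 1
  | n + 1, s => dualMarkovOp μ (a (s + 1)) (b (s + 1) * backwardLikelihood μ a b n (s + 1))

variable [SFinite μ]

theorem admissibleLikelihood_mul_backwardLikelihood (ha : ∀ r, StrongMixing (a r) (h r) c C)
    (hb : ∀ r, AdmissibleLikelihood μ (h r) (b r)) (n s : ℕ) :
    AdmissibleLikelihood μ (h s) (b s * backwardLikelihood μ a b n s) := by
  induction n generalizing s with
  | zero => simpa only [backwardLikelihood, mul_one] using hb s
  | succ n ih =>
    have hnext := ih (s + 1)
    have ha' := ha (s + 1)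
    exact (hb s).mul_bdd (ha s).nonneg (ha'.measurable_dualMarkovOp hnext.measurable)
      (mul_pos ha'.pos hnext.integral_pos) (ha'.le_dualMarkovOp hnext) (ha'.dualMarkovOp_le hnext)

theorem integral_abs_filterK_sub_le (ha : ∀ r, StrongMixing (a r) (h r) c C)
    (hb : ∀ r, AdmissibleLikelihood μ (h r) (b r)) (hf : IsDensity μ f) (hg : IsDensity μ g)
    (n s : ℕ) :
    ∫ x, |filterK μ a b s (s + n) f x - filterK μ a b s (s + n) g x| ∂μ
      ≤ (1 - c / C) ^ n * ∫ x, |bayesOp μ f (backwardLikelihood μ a b n s) x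
          - bayesOp μ g (backwardLikelihood μ a b n s) x| ∂μ := by
  induction n generalizing f g s with
  | zero => simp [filterK_self, backwardLikelihood, hf.bayesOp_one, hg.bayesOp_one]
  | succ n ih =>
    have ha' := ha (s + 1)
    have hb' := hb (s + 1)
    have hlt : s < s + (n + 1) := by lia
    have hsucc : s + (n + 1) = s + 1 + n := by lia
    rw [filterK_of_lt hlt, filterK_of_lt hlt, hsucc, pow_succ, mul_assoc]
    refine (ih (ha'.isDensity_bayesOp_markovOp hb' hf) (ha'.isDensity_bayesOp_markovOp hb' hg)
      (s + 1)).trans (mul_le_mul_of_nonneg_left ?_ (pow_nonneg ha'.one_sub_div_nonneg n))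
    rw [bayesOp_bayesOp (ha'.integral_markovOp_mul_pos hb' hf).ne',
      bayesOp_bayesOp (ha'.integral_markovOp_mul_pos hb' hg).ne']
    exact ha'.integral_abs_bayesOp_markovOp_sub_le
      (admissibleLikelihood_mul_backwardLikelihood ha hb n (s + 1)) hf hg

theorem integral_abs_bayesOp_backwardLikelihood_sub_le
    (ha : ∀ r, StrongMixing (a r) (h r) c C) (hb : ∀ r, AdmissibleLikelihood μ (h r) (b r))
    (hf : IsDensity μ f) (hg : IsDensity μ g) (n s : ℕ) :
    ∫ x, |bayesOp μ f (backwardLikelihood μ a b (n + 1) s) x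
        - bayesOp μ g (backwardLikelihood μ a b (n + 1) s) x| ∂μ
      ≤ (c / C)⁻¹ * ∫ x, |f x - g x| ∂μ := by
  have ha' := ha (s + 1)
  have hnext := admissibleLikelihood_mul_backwardLikelihood ha hb n (s + 1)
  have hle := hf.integral_abs_bayesOp_sub_le hg
    (ha'.measurable_dualMarkovOp hnext.measurable).aestronglyMeasurable
    (mul_pos ha'.pos hnext.integral_pos) (ha'.le_dualMarkovOp hnext) (ha'.dualMarkovOp_le hnext)
  rwa [mul_div_mul_right _ _ hnext.integral_pos.ne', ← inv_div] at hle

theorem filter_exponential_forgetting_general (ha : ∀ r, StrongMixing (a r) (h r) c C)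
    (hb : ∀ r, AdmissibleLikelihood μ (h r) (b r)) (hf : IsDensity μ f) (hg : IsDensity μ g)
    {s t : ℕ} (hst : s < t) :
    ∫ x, |filterK μ a b s t f x - filterK μ a b s t g x| ∂μ
      ≤ (c / C)⁻¹ * (1 - c / C) ^ (t - s) * ∫ x, |f x - g x| ∂μ := by
  obtain ⟨n, rfl⟩ := Nat.exists_eq_add_of_lt hst
  rw [add_assoc, Nat.add_sub_cancel_left, mul_comm (c / C)⁻¹, mul_assoc]
  exact (integral_abs_filterK_sub_le ha hb hf hg (n + 1) s).trans <|
    mul_le_mul_of_nonneg_left (integral_abs_bayesOp_backwardLikelihood_sub_le ha hb hf hg n s)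
      (pow_nonneg (ha s).one_sub_div_nonneg (n + 1))

end Filter

/-- Lemma 10: under the strong mixing condition (19)
(`c_a h_t(x) ≤ a_t(x', x) ≤ C_a h_t(x)`) and the condition (20)
(`0 < ∫ b_t h_t dμ < ∞`), the filter transition operators forget their initial
condition exponentially: for any two densities `f, g` and any `s < t`,
`‖K_{s,t}(f) − K_{s,t}(g)‖₁ ≤ γ_a⁻¹ (1 − γ_a)^(t−s) ‖f − g‖₁` where `γ_a = c_a/C_a`. -/
theorem filter_exponential_forgetting
    {α : Type*} [MeasurableSpace α] (μ : Measure α) [SigmaFinite μ]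
    (a : ℕ → α → α → ℝ) (b : ℕ → α → ℝ) (h : ℕ → α → ℝ)
    (ca Ca : ℝ) (hca : 0 < ca) (hcaCa : ca < Ca)
    (ha_meas : ∀ t, Measurable (Function.uncurry (a t)))
    (hb_meas : ∀ t, Measurable (b t)) (hb_nonneg : ∀ t x, 0 ≤ b t x)
    (hh_meas : ∀ t, Measurable (h t)) (hh_nonneg : ∀ t x, 0 ≤ h t x)
    (hh_int : ∀ t, Integrable (h t) μ) (hh_one : ∀ t, ∫ x, h t x ∂μ = 1)
    -- condition (19)
    (h19 : ∀ t x' x, ca * h t x ≤ a t x' x ∧ a t x' x ≤ Ca * h t x)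
    -- condition (20)
    (h20_pos : ∀ t, 0 < ∫ x, b t x * h t x ∂μ)
    (h20_int : ∀ t, Integrable (fun x => b t x * h t x) μ) :
    ∀ f g : α → ℝ, Measurable f → Measurable g →
      (∀ x, 0 ≤ f x) → (∀ x, 0 ≤ g x) →
      Integrable f μ → Integrable g μ →
      (∫ x, f x ∂μ) = 1 → (∫ x, g x ∂μ) = 1 →
      ∀ s t : ℕ, s < t →
        ∫ x, |filterK μ a b s t f x - filterK μ a b s t g x| ∂μ
          ≤ (ca / Ca)⁻¹ * (1 - ca / Ca) ^ (t - s) * ∫ x, |f x - g x| ∂μ := by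
  intro f g _ _ hf_nonneg hg_nonneg hf_int hg_int hf_one hg_one s t hst
  exact filter_exponential_forgetting_general
    (fun r => ⟨ha_meas r, hh_nonneg r, hca, hcaCa.le, fun x' x => (h19 r x' x).1,
      fun x' x => (h19 r x' x).2⟩)
    (fun r => ⟨hb_meas r, hb_nonneg r, h20_int r, h20_pos r⟩)
    ⟨hf_nonneg, hf_int, hf_one⟩ ⟨hg_nonneg, hg_int, hg_one⟩ hst
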